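/- Let η > 0, β ≥ 0, J₀ ∈ ℝ^{N×p}, J' ∈ ℝ^{N'×p}, θ₀ ∈ ℝ^p, f₀, y ∈ ℝ^N, f₀' ∈ ℝ^{N'}, and assume Θ̂ + βI_N is invertible, where Θ̂ := J₀J₀ᵀ. Define θ_0 := θ₀ and θ_{t+1} := θ_t − η[(J₀ᵀJ₀ + βI_p)(θ_t − θ₀) + J₀ᵀ(f₀ − y)]. Then for every natural number t, the linearized test predictions satisfy f₀' + J'(θ_t − θ₀) = f₀' + Θ̂'(I_N − (I_N − η(Θ̂ + βI_N))^t)(Θ̂ + βI_N)^{-1}(y − f₀), where Θ̂' := J'J₀ᵀ. -/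

import Mathlib

open Matrix

/-!
Write `H = BA + β` and `K = AB + β`, with `B = J₀ᵀ` for gradient descent. The push-through identity
`HB = BK` shows that `θ⋆ = θ₀ + BK⁻¹(y - f₀)` is a stationary point of the recursion, so the error
`θ_t - θ⋆` is multiplied by `1 - ηH` at each step. Pushing `(1 - ηH) ^ t` through `B` turns it into
a power of `1 - ηK`.
-/

section

variable {l m n R : Type*} [Fintype m] [DecidableEq m] [Fintype n] [DecidableEq n]

theorem pow_mul_eq_mul_pow_of_mul_eq_mul [Semiring R] {M : Matrix n n R} {L : Matrix m m R}
    {B : Matrix n m R} (h : M * B = B * L) (t : ℕ) : M ^ t * B = B * L ^ t := by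
  induction t with
  | zero => simp
  | succ t ih =>
    rw [pow_succ, Matrix.mul_assoc, h, ← Matrix.mul_assoc, ih, Matrix.mul_assoc, ← pow_succ]

theorem mul_add_smul_one_mul_comm [CommSemiring R]
    (A : Matrix m n R) (B : Matrix n m R) (β : R) :
    (B * A + β • (1 : Matrix n n R)) * B = B * (A * B + β • (1 : Matrix m m R)) := by
  simp [Matrix.add_mul, Matrix.mul_add, Matrix.mul_assoc]

theorem one_sub_smul_pow_mul_eq_mul_pow [CommRing R]
    {H : Matrix n n R} {K : Matrix m m R} {B : Matrix n m R} (h : H * B = B * K) (η : R) (t : ℕ) :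
    (1 - η • H) ^ t * B = B * (1 - η • K) ^ t :=
  pow_mul_eq_mul_pow_of_mul_eq_mul (by simp [Matrix.sub_mul, Matrix.mul_sub, h]) t

theorem sub_eq_one_sub_smul_pow_mulVec_sub [Ring R] {η : R} {H : Matrix n n R}
    {x : ℕ → n → R} {c : n → R} (hx : ∀ t, x (t + 1) = x t - η • (H *ᵥ (x t - c))) (t : ℕ) :
    x t - c = (1 - η • H) ^ t *ᵥ (x 0 - c) := by
  induction t with
  | zero => simp
  | succ t ih =>
    calc x (t + 1) - c = (1 - η • H) *ᵥ (x t - c) := by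
          rw [hx, sub_mulVec, one_mulVec, smul_mulVec, sub_right_comm]
      _ = (1 - η • H) ^ (t + 1) *ᵥ (x 0 - c) := by rw [ih, mulVec_mulVec, ← pow_succ']

theorem mul_add_smul_one_mulVec_mul_inv_mulVec [CommRing R]
    {A : Matrix m n R} {B : Matrix n m R} {β : R}
    (hK : IsUnit (A * B + β • (1 : Matrix m m R))) (r : m → R) :
    (B * A + β • (1 : Matrix n n R)) *ᵥ
      ((B * (A * B + β • (1 : Matrix m m R))⁻¹) *ᵥ r) = B *ᵥ r := by
  rw [mulVec_mulVec, ← Matrix.mul_assoc, mul_add_smul_one_mul_comm,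
    mul_nonsing_inv_cancel_right]
  exact (isUnit_iff_isUnit_det _).mp hK

theorem regularized_gradient_descent_sub_initial_eq [CommRing R] {η β : R} {A : Matrix m n R}
    {B : Matrix n m R} {θ₀ : n → R} {f₀ y : m → R}
    (hK : IsUnit (A * B + β • (1 : Matrix m m R)))
    {θ : ℕ → n → R} (hθ0 : θ 0 = θ₀)
    (hrec : ∀ t, θ (t + 1) = θ t -
      η • ((B * A + β • (1 : Matrix n n R)) *ᵥ (θ t - θ₀) + B *ᵥ (f₀ - y))) (t : ℕ) :
    θ t - θ₀ = (B * ((1 - (1 - η • (A * B + β • (1 : Matrix m m R))) ^ t) *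
      (A * B + β • (1 : Matrix m m R))⁻¹)) *ᵥ (y - f₀) := by
  have push := mul_add_smul_one_mul_comm A B β
  have stationary := mul_add_smul_one_mulVec_mul_inv_mulVec hK (y - f₀)
  set H := B * A + β • (1 : Matrix n n R)
  set K := A * B + β • (1 : Matrix m m R)
  set d := (B * K⁻¹) *ᵥ (y - f₀) with hd
  have hstep (t : ℕ) : θ (t + 1) = θ t - η • (H *ᵥ (θ t - (θ₀ + d))) := by
    rw [hrec, ← sub_sub, mulVec_sub H (θ t - θ₀), stationary, ← neg_sub y f₀, mulVec_neg,
      sub_eq_add_neg (H *ᵥ _)]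
  have herror : θ t - (θ₀ + d) = -((1 - η • H) ^ t *ᵥ d) := by
    rw [sub_eq_one_sub_smul_pow_mulVec_sub hstep, hθ0, sub_add_cancel_left, mulVec_neg]
  calc θ t - θ₀ = d - (1 - η • H) ^ t *ᵥ d := by
        rw [sub_eq_add_neg d, ← herror]; abel
    _ = (B * K⁻¹ - B * (1 - η • K) ^ t * K⁻¹) *ᵥ (y - f₀) := by
        rw [hd, mulVec_mulVec, ← Matrix.mul_assoc,
          one_sub_smul_pow_mul_eq_mul_pow push, sub_mulVec]
    _ = (B * ((1 - (1 - η • K) ^ t) * K⁻¹)) *ᵥ (y - f₀) := by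
        rw [Matrix.sub_mul, Matrix.mul_sub, Matrix.one_mul, Matrix.mul_assoc]

theorem regularized_gradient_descent_test_predictions_formula_general [CommRing R] (η β : R)
    (A : Matrix m n R) (B : Matrix n m R) (A' : Matrix l n R)
    (θ₀ : n → R) (f₀ y : m → R) (f₀' : l → R)
    (hK : IsUnit (A * B + β • (1 : Matrix m m R)))
    (θ : ℕ → n → R) (hθ0 : θ 0 = θ₀)
    (hrec : ∀ t, θ (t + 1) = θ t -
      η • ((B * A + β • (1 : Matrix n n R)) *ᵥ (θ t - θ₀) + B *ᵥ (f₀ - y))) (t : ℕ) :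
    f₀' + A' *ᵥ (θ t - θ₀) =
      f₀' + ((A' * B) * ((1 - (1 - η • (A * B + β • (1 : Matrix m m R))) ^ t) *
        (A * B + β • (1 : Matrix m m R))⁻¹)) *ᵥ (y - f₀) := by
  rw [regularized_gradient_descent_sub_initial_eq hK hθ0 hrec, mulVec_mulVec, Matrix.mul_assoc]

end

/-- For the gradient-descent recursion
`θ_{t+1} = θ_t − η[(J₀ᵀJ₀ + βI_p)(θ_t − θ₀) + J₀ᵀ(f₀ − y)]`, `θ_0 = θ₀`, with
`Θ̂ + βI_N` invertible (`Θ̂ = J₀J₀ᵀ`), the linearized test predictions satisfy, for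
every `t ∈ ℕ`,
`f₀' + J'(θ_t − θ₀) = f₀' + Θ̂'(I − (I − η(Θ̂ + βI))^t)(Θ̂ + βI)⁻¹(y − f₀)`,
where `Θ̂' = J'J₀ᵀ`. -/
theorem regularized_gradient_descent_test_predictions_formula
    {N N' p : ℕ} (η β : ℝ) (hη : 0 < η) (hβ : 0 ≤ β)
    (J₀ : Matrix (Fin N) (Fin p) ℝ) (J' : Matrix (Fin N') (Fin p) ℝ)
    (θ₀ : Fin p → ℝ) (f₀ y : Fin N → ℝ) (f₀' : Fin N' → ℝ)
    (hinv : IsUnit (J₀ * J₀ᵀ + β • (1 : Matrix (Fin N) (Fin N) ℝ)))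
    (θ : ℕ → Fin p → ℝ) (hθ0 : θ 0 = θ₀)
    (hrec : ∀ t : ℕ, θ (t + 1) = θ t -
      η • ((J₀ᵀ * J₀ + β • (1 : Matrix (Fin p) (Fin p) ℝ)).mulVec (θ t - θ₀) +
        J₀ᵀ.mulVec (f₀ - y))) :
    ∀ t : ℕ,
      f₀' + J'.mulVec (θ t - θ₀) =
        f₀' + ((J' * J₀ᵀ) *
          (((1 : Matrix (Fin N) (Fin N) ℝ) -
              ((1 : Matrix (Fin N) (Fin N) ℝ) -
                η • (J₀ * J₀ᵀ + β • (1 : Matrix (Fin N) (Fin N) ℝ))) ^ t) *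
            (J₀ * J₀ᵀ + β • (1 : Matrix (Fin N) (Fin N) ℝ))⁻¹)).mulVec (y - f₀) :=
  regularized_gradient_descent_test_predictions_formula_general η β J₀ J₀ᵀ J' θ₀ f₀ y f₀' hinv
    θ hθ0 hrec
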